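/- Let G be a field, C ⊆ G a subfield, and let q be a prime number different from the characteristic of G. Let w ∈ G be a nonzero element and let v₀ ∈ C be such that both v₀ − w and v₀ − w^{-1} are q-th powers in G. Then for every discrete valuation v on G trivial on C, v(w) ≡ 0 (mod q). -/

import Mathlib

/-- If `y ^ n = c - x` with `v x` negative and `v c` nonnegative, then `v x` is divisible by `n`. -/
theorem AddValuation.natCast_dvd_of_pow_eq_sub {K : Type*} [Field K]
    (v : AddValuation K (WithTop ℤ)) {n : ℕ} {c x y : K} {z : ℤ}
    (hx : v x = (z : WithTop ℤ)) (hz : z < 0) (hc : 0 ≤ v c) (hy : y ^ n = c - x) :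
    (n : ℤ) ∣ z := by
  have hlt : v x < v c := lt_of_lt_of_le (by rw [hx]; exact_mod_cast hz) hc
  have hyn : n • v y = (z : WithTop ℤ) := by
    rw [← v.map_pow, hy, v.map_sub_swap, v.map_sub_eq_of_lt_left hlt, hx]
  rcases Nat.eq_zero_or_pos n with rfl | hn
  · rw [zero_nsmul] at hyn
    have : (0 : ℤ) = z := by exact_mod_cast hyn
    omega
  cases hvy : v y with
  | top =>
    obtain ⟨m, rfl⟩ := Nat.exists_eq_succ_of_ne_zero hn.ne'
    rw [hvy, succ_nsmul, add_top] at hyn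
    exact absurd hyn WithTop.top_ne_coe
  | coe k =>
    rw [hvy, ← WithTop.coe_nsmul, WithTop.coe_inj, nsmul_eq_mul] at hyn
    exact ⟨k, hyn.symm⟩

/-- Lemma `le:forevery`: Let `G` be a field, `C ⊆ G` a subfield, and `q`
a prime number different from the characteristic of `G`.  Let `w ∈ G` be nonzero and let
`v₀ ∈ C` be such that both `v₀ - w` and `v₀ - w⁻¹` are `q`-th powers in `G`.  Then for
every discrete valuation `v` on `G` trivial on `C`, `v(w) ≡ 0 (mod q)`. -/
theorem stmt_14 (C G : Type*) [Field C] [Field G] [Algebra C G]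
    (q : ℕ) (hq : q.Prime) (hchar : (q : G) ≠ 0)
    (w : G) (hw : w ≠ 0) (v₀ : C)
    (h1 : ∃ y : G, y ^ q = algebraMap C G v₀ - w)
    (h2 : ∃ y : G, y ^ q = algebraMap C G v₀ - w⁻¹) :
    ∀ v : AddValuation G (WithTop ℤ),
      (∀ z : ℤ, ∃ x : G, v x = (z : WithTop ℤ)) →
      (∀ c : C, c ≠ 0 → v (algebraMap C G c) = 0) →
      ∃ z : ℤ, v w = (z : WithTop ℤ) ∧ (q : ℤ) ∣ z := by
  intro v _ hv
  obtain ⟨y₁, hy₁⟩ := h1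
  obtain ⟨y₂, hy₂⟩ := h2
  have hc : 0 ≤ v (algebraMap C G v₀) := by
    rcases eq_or_ne v₀ 0 with rfl | h
    · simp
    · exact (hv v₀ h).ge
  obtain ⟨z, hz⟩ := WithTop.ne_top_iff_exists.mp (v.ne_top_iff.mpr hw)
  obtain ⟨z', hz'⟩ := WithTop.ne_top_iff_exists.mp (v.ne_top_iff.mpr (inv_ne_zero hw))
  have hsum : z + z' = 0 := by
    have h : v w + v w⁻¹ = 0 := by rw [← v.map_mul, mul_inv_cancel₀ hw, v.map_one]
    rw [← hz, ← hz'] at h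
    exact_mod_cast h
  refine ⟨z, hz.symm, ?_⟩
  rcases lt_trichotomy z 0 with h | rfl | h
  · exact v.natCast_dvd_of_pow_eq_sub hz.symm h hc hy₁
  · exact dvd_zero _
  · have hdvd := v.natCast_dvd_of_pow_eq_sub hz'.symm (by omega) hc hy₂
    rwa [eq_neg_of_add_eq_zero_left hsum, dvd_neg]
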